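/- arXiv:math/0608591 — 2 statements merged into one kernel-verified Lean document; each statement's English description precedes it below -/
import Mathlib

section
/- Let 𝒜 be a nonempty real central arrangement of hyperplanes and m a positive integer. Then every admissible map Φ : Ch^m → Ch is projective if and only if either (case 1) m = 1, or (case 2) 𝒜 is indecomposable with |𝒜| ≥ 3. -/
/-!
Chambers correspond to realizable sign vectors, so an admissible map is a family of functions
`φⱼ : B^m → B`, one for each hyperplane, fixing the two constant tuples and jointly preserving
realizability. If `m = 1`, each `φⱼ` is the identity.

Suppose `𝒜` is decomposable. Rank additivity says that the two flats (the intersections of the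
hyperplanes in each part) span the space (`rnkOn_add_iff`), so signs on the two parts can be
prescribed independently (`exists_glue`); using different projections on the two parts gives a
non-projective admissible map when `m ≥ 2`. Two distinct hyperplanes are always decomposable, and
for one hyperplane the maximum of two signs is a counterexample.

Suppose `𝒜` is indecomposable with at least three hyperplanes. For every partition of `𝒜` into
two nonempty parts, some form is a nonzero combination of either part. A resulting relation
`∑ cⱼ αⱼ = 0` of minimal support is a circuit meeting both parts (`exists_circuit`), of length at
least three because the hyperplanes are distinct. After twisting by the signs of the `cⱼ`, the
sign vectors realizable on a circuit are exactly the non-constant ones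
(`exists_chamber_on_circuit`, `not_const_on_circuit`). Functions preserving not-all-equal on at
least three indices and fixing the constants are all one and the same projection
(`exists_common_eval`): opposite inputs at two indices show that they coincide and are self-dual,
and then the sets sent to `+` form an ultrafilter on a finite set. Thus `Φ` acts as one projection
along a circuit; the set of hyperplanes on which it is that projection is nonempty, and if it were
proper, a circuit crossing it would force the same projection outside it.
-/

noncomputable section
attribute [local instance] Classical.propDecidable

/-- A (nonempty if `ι` is nonempty) real central arrangement of hyperplanes in `ℝ^ℓ`,
given by a family of nonzero defining linear forms with pairwise distinct kernels
(the hyperplanes `H j = ker (form j)`). -/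
structure Arrangement (ℓ : ℕ) (ι : Type) [Fintype ι] where
  form : ι → ((Fin ℓ → ℝ) →ₗ[ℝ] ℝ)
  form_ne_zero : ∀ j, form j ≠ 0
  ker_injective : ∀ j k, LinearMap.ker (form j) = LinearMap.ker (form k) → j = k

namespace Arrangement

variable {ℓ : ℕ} {ι : Type} [Fintype ι]

/-- The complement `ℝ^ℓ ∖ (H₁ ∪ ⋯ ∪ Hₙ)`. -/
def Complement (A : Arrangement ℓ ι) : Set (Fin ℓ → ℝ) :=
  {x | ∀ j, A.form j x ≠ 0}

/-- A chamber is a connected component of the complement. -/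
def IsChamber (A : Arrangement ℓ ι) (C : Set (Fin ℓ → ℝ)) : Prop :=
  ∃ x ∈ A.Complement, C = connectedComponentIn A.Complement x

/-- The set (type) of chambers of the arrangement. -/
abbrev Ch (A : Arrangement ℓ ι) : Type := {C : Set (Fin ℓ → ℝ) // A.IsChamber C}

/-- `εⱼ^σ(C) = στ` when `C ⊆ Hⱼ^τ`; `B = {+,-}` is realized as `ℤˣ`, `+ = 1`, `- = -1`. -/
def eps (A : Arrangement ℓ ι) (j : ι) (σ : ℤˣ) (C : A.Ch) : ℤˣ :=
  σ * (if ∀ x ∈ C.1, 0 < A.form j x then 1 else -1)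

/-- `Φ : Ch^m → Ch` is admissible if there is a family `φⱼ^σ : B^m → B` with
`φⱼ^σ(+,…,+) = +` and `εⱼ^σ ∘ Φ = φⱼ^σ ∘ εⱼ^σ` (componentwise) for all `j, σ`. -/
def IsAdmissible (A : Arrangement ℓ ι) (m : ℕ) (Φ : (Fin m → A.Ch) → A.Ch) : Prop :=
  ∃ φ : ι → ℤˣ → ((Fin m → ℤˣ) → ℤˣ),
    (∀ j σ, φ j σ (fun _ => 1) = 1) ∧
    ∀ j σ 𝒞, A.eps j σ (Φ 𝒞) = φ j σ (fun i => A.eps j σ (𝒞 i))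

/-- `r(ℬ) = codim (⋂_{H ∈ ℬ} H)` for the subarrangement indexed by `S`. -/
def rnkOn (A : Arrangement ℓ ι) (S : Finset ι) : ℕ :=
  ℓ - Module.finrank ℝ ↥(⨅ j ∈ S, LinearMap.ker (A.form j))

/-- `r(𝒜)`. -/
def rnk (A : Arrangement ℓ ι) : ℕ := A.rnkOn Finset.univ

/-- The subarrangement indexed by `S` decomposes as a disjoint union of two nonempty
subarrangements with additive rank. -/
def DecomposableOn (A : Arrangement ℓ ι) (S : Finset ι) : Prop :=
  ∃ S₁ S₂ : Finset ι, S₁.Nonempty ∧ S₂.Nonempty ∧ Disjoint S₁ S₂ ∧ S₁ ∪ S₂ = S ∧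
    A.rnkOn S = A.rnkOn S₁ + A.rnkOn S₂

def IndecomposableOn (A : Arrangement ℓ ι) (S : Finset ι) : Prop := ¬ A.DecomposableOn S

def Decomposable (A : Arrangement ℓ ι) : Prop := A.DecomposableOn Finset.univ

def Indecomposable (A : Arrangement ℓ ι) : Prop := ¬ A.Decomposable

/-- The subarrangement of `A` consisting of the hyperplanes indexed by `S`. -/
def restrict (A : Arrangement ℓ ι) (S : Finset ι) : Arrangement ℓ {j : ι // j ∈ S} where
  form := fun j => A.form j.1
  form_ne_zero := fun j => A.form_ne_zero j.1
  ker_injective := fun j k h => Subtype.ext (A.ker_injective j.1 k.1 h)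

/-- A dependent subarrangement: `r(ℬ) < |ℬ|`. -/
def DependentOn (A : Arrangement ℓ ι) (S : Finset ι) : Prop := A.rnkOn S < S.card

/-- A circuit: a minimally dependent subarrangement. -/
def IsCircuitOn (A : Arrangement ℓ ι) (S : Finset ι) : Prop :=
  A.DependentOn S ∧ ∀ T ⊂ S, ¬ A.DependentOn T

end Arrangement

namespace Arrangement

variable {ℓ : ℕ} {ι : Type} [Fintype ι]

/-! ### Chambers and sign vectors -/

/-- The sign of a nonzero real number as an element of `B = ℤˣ`; the junk value at `0` is `-1`. -/
def sgn (r : ℝ) : ℤˣ := if 0 < r then 1 else -1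

theorem sgn_of_pos {r : ℝ} (h : 0 < r) : sgn r = 1 := if_pos h

theorem sgn_of_neg {r : ℝ} (h : r < 0) : sgn r = -1 := if_neg (not_lt.2 h.le)

theorem sgn_mul {r s : ℝ} (hr : r ≠ 0) (hs : s ≠ 0) : sgn (r * s) = sgn r * sgn s := by
  rcases hr.lt_or_gt with hr | hr <;> rcases hs.lt_or_gt with hs | hs
  · rw [sgn_of_pos (mul_pos_of_neg_of_neg hr hs), sgn_of_neg hr, sgn_of_neg hs]; rfl
  · rw [sgn_of_neg (mul_neg_of_neg_of_pos hr hs), sgn_of_neg hr, sgn_of_pos hs]; rfl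
  · rw [sgn_of_neg (mul_neg_of_pos_of_neg hr hs), sgn_of_pos hr, sgn_of_neg hs]; rfl
  · rw [sgn_of_pos (mul_pos hr hs), sgn_of_pos hr, sgn_of_pos hs]; rfl

theorem pos_of_sgn_eq_one {r : ℝ} (h : sgn r = 1) : 0 < r := by
  by_contra hr
  rw [sgn, if_neg hr] at h
  exact absurd h (by decide)

theorem neg_of_sgn_ne_one {r : ℝ} (hr : r ≠ 0) (h : sgn r ≠ 1) : r < 0 := by
  by_contra h'
  exact h (sgn_of_pos (lt_of_le_of_ne (not_lt.1 h') hr.symm))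

theorem units_eq_neg_one {s : ℤˣ} (h : s ≠ 1) : s = -1 :=
  (Int.units_eq_one_or s).resolve_left h

/-- The chamber containing a given point of the complement. -/
def chamberOf (A : Arrangement ℓ ι) (x : Fin ℓ → ℝ) (hx : x ∈ A.Complement) : A.Ch :=
  ⟨connectedComponentIn A.Complement x, x, hx, rfl⟩

theorem exists_eq_chamberOf (A : Arrangement ℓ ι) (C : A.Ch) :
    ∃ x, ∃ hx : x ∈ A.Complement, C = A.chamberOf x hx := by
  obtain ⟨C, x, hx, rfl⟩ := C
  exact ⟨x, hx, rfl⟩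

theorem form_continuous (A : Arrangement ℓ ι) (j : ι) : Continuous (A.form j) :=
  LinearMap.continuous_of_finiteDimensional _

/-- A defining form has constant sign on a connected component of the complement, by the
intermediate value theorem. -/
theorem pos_of_mem_component (A : Arrangement ℓ ι) {x y : Fin ℓ → ℝ} (j : ι)
    (hx : x ∈ A.Complement) (hy : y ∈ connectedComponentIn A.Complement x)
    (h : 0 < A.form j x) : 0 < A.form j y := by
  by_contra hneg
  have hle : A.form j y ≤ 0 := not_lt.1 hneg
  obtain ⟨z, hz, hz0⟩ := (isPreconnected_connectedComponentIn (F := A.Complement)).intermediate_value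
    hy (mem_connectedComponentIn hx) (A.form_continuous j).continuousOn ⟨hle, h.le⟩
  exact connectedComponentIn_subset _ _ hz j hz0

theorem eps_chamberOf (A : Arrangement ℓ ι) (x : Fin ℓ → ℝ) (hx : x ∈ A.Complement) (j : ι)
    (σ : ℤˣ) : A.eps j σ (A.chamberOf x hx) = σ * sgn (A.form j x) := by
  unfold eps sgn chamberOf
  congr 1
  refine if_congr ⟨fun h => h x (mem_connectedComponentIn hx),
    fun h y hy => A.pos_of_mem_component j hx hy h⟩ rfl rfl

theorem eps_eq_mul (A : Arrangement ℓ ι) (j : ι) (σ : ℤˣ) (C : A.Ch) :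
    A.eps j σ C = σ * A.eps j 1 C := by
  simp [eps]

/-- A chamber is determined by its sign vector: points with the same signs span a segment
inside the complement. -/
theorem ch_ext (A : Arrangement ℓ ι) {C D : A.Ch} (h : ∀ j, A.eps j 1 C = A.eps j 1 D) :
    C = D := by
  obtain ⟨x, hx, rfl⟩ := A.exists_eq_chamberOf C
  obtain ⟨y, hy, rfl⟩ := A.exists_eq_chamberOf D
  simp only [eps_chamberOf, one_mul] at h
  apply Subtype.ext
  apply connectedComponentIn_eq
  refine (convex_segment x y).isPreconnected.subset_connectedComponentIn
    (left_mem_segment ℝ x y) ?_ (right_mem_segment ℝ x y)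
  rintro z ⟨a, b, ha, hb, hab, rfl⟩ j
  simp only [map_add, map_smul, smul_eq_mul]
  rcases (hx j).lt_or_gt with hxj | hxj
  · have hyj : A.form j y < 0 := neg_of_sgn_ne_one (hy j) (by
      rw [← h j, sgn_of_neg hxj]; decide)
    rcases ha.eq_or_lt with rfl | ha
    · have : b = 1 := by linarith
      simp [this, hyj.ne]
    · nlinarith [mul_neg_of_pos_of_neg ha hxj, mul_nonpos_of_nonneg_of_nonpos hb hyj.le]
  · have hyj : 0 < A.form j y := pos_of_sgn_eq_one (by rw [← h j, sgn_of_pos hxj])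
    rcases ha.eq_or_lt with rfl | ha
    · have : b = 1 := by linarith
      simp [this, hyj.ne']
    · nlinarith [mul_pos ha hxj, mul_nonneg hb hyj.le]

theorem complement_nonempty (A : Arrangement ℓ ι) : ∃ x, x ∈ A.Complement := by
  obtain ⟨x, hx⟩ := Module.Dual.exists_forall_ne_zero_of_forall_exists (K := ℝ)
    (M := Fin ℓ → ℝ) A.form (fun i => by
      by_contra! h
      exact A.form_ne_zero i (LinearMap.ext h))
  exact ⟨x, hx⟩

/-- Every point can be moved off the hyperplanes without changing any nonzero sign. -/
theorem exists_perturb (A : Arrangement ℓ ι) (x : Fin ℓ → ℝ) :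
    ∃ y ∈ A.Complement, ∀ j, A.form j x ≠ 0 → sgn (A.form j y) = sgn (A.form j x) := by
  obtain ⟨v, hv⟩ := A.complement_nonempty
  have key : ∀ j, ∀ᶠ ε : ℝ in nhdsWithin 0 (Set.Ioi 0), A.form j (x + ε • v) ≠ 0 ∧
      (A.form j x ≠ 0 → sgn (A.form j (x + ε • v)) = sgn (A.form j x)) := by
    intro j
    have ht : Filter.Tendsto (fun ε : ℝ => A.form j (x + ε • v)) (nhdsWithin 0 (Set.Ioi 0))
        (nhds (A.form j x)) := by
      have hc : Continuous (fun ε : ℝ => A.form j (x + ε • v)) :=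
        (A.form_continuous j).comp (by fun_prop)
      have := hc.tendsto 0
      simp only [zero_smul, add_zero] at this
      exact this.mono_left nhdsWithin_le_nhds
    rcases lt_trichotomy (A.form j x) 0 with h | h | h
    · filter_upwards [ht.eventually (gt_mem_nhds h)] with ε hε
      exact ⟨hε.ne, fun _ => by rw [sgn_of_neg hε, sgn_of_neg h]⟩
    · filter_upwards [self_mem_nhdsWithin] with ε hε
      refine ⟨?_, fun h' => absurd h h'⟩
      simp only [map_add, map_smul, h, zero_add, smul_eq_mul]
      exact mul_ne_zero (ne_of_gt hε) (hv j)
    · filter_upwards [ht.eventually (lt_mem_nhds h)] with ε hε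
      exact ⟨hε.ne', fun _ => by rw [sgn_of_pos hε, sgn_of_pos h]⟩
  obtain ⟨ε, hε⟩ := (Filter.eventually_all.2 key).exists
  exact ⟨x + ε • v, fun j => (hε j).1, fun j => (hε j).2⟩

theorem exists_eps_eq (A : Arrangement ℓ ι) (j : ι) (s : ℤˣ) : ∃ C : A.Ch, A.eps j 1 C = s := by
  obtain ⟨v, hv⟩ := A.complement_nonempty
  have hv' : -v ∈ A.Complement := fun k => by simpa using hv k
  have h : sgn (A.form j (-v)) = -sgn (A.form j v) := by
    rcases (hv j).lt_or_gt with h | h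
    · rw [sgn_of_neg h, sgn_of_pos (by simpa using h)]; rfl
    · rw [sgn_of_pos h, sgn_of_neg (by simpa using h)]
  by_cases hs : sgn (A.form j v) = s
  · exact ⟨A.chamberOf v hv, by rw [eps_chamberOf, one_mul, hs]⟩
  · refine ⟨A.chamberOf (-v) hv', ?_⟩
    rw [eps_chamberOf, one_mul, h]
    rcases Int.units_eq_one_or s with rfl | rfl
    · rw [units_eq_neg_one hs]; rfl
    · rw [(Int.units_eq_one_or _).resolve_right hs]

/-! ### Decompositions as complementary flats -/

/-- The intersection of the hyperplanes indexed by `S`. -/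
def flat (A : Arrangement ℓ ι) (S : Finset ι) : Submodule ℝ (Fin ℓ → ℝ) :=
  ⨅ j ∈ S, LinearMap.ker (A.form j)

theorem mem_flat (A : Arrangement ℓ ι) (S : Finset ι) (x : Fin ℓ → ℝ) :
    x ∈ A.flat S ↔ ∀ j ∈ S, A.form j x = 0 := by
  simp [flat, Submodule.mem_iInf]

/-- Rank additivity says exactly that the two flats span the whole space. -/
theorem rnkOn_add_iff (A : Arrangement ℓ ι) (S₁ S₂ : Finset ι) :
    A.rnkOn (S₁ ∪ S₂) = A.rnkOn S₁ + A.rnkOn S₂ ↔ A.flat S₁ ⊔ A.flat S₂ = ⊤ := by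
  have hinf : A.flat (S₁ ∪ S₂) = A.flat S₁ ⊓ A.flat S₂ := by
    ext x
    simp only [mem_flat, Submodule.mem_inf, Finset.mem_union]
    exact ⟨fun h => ⟨fun j hj => h j (Or.inl hj), fun j hj => h j (Or.inr hj)⟩,
      fun h j hj => hj.elim (h.1 j) (h.2 j)⟩
  have hdim := Submodule.finrank_sup_add_finrank_inf_eq (A.flat S₁) (A.flat S₂)
  have h₁ := (A.flat S₁).finrank_le
  have h₂ := (A.flat S₂).finrank_le
  have h₃ := (A.flat S₁ ⊔ A.flat S₂).finrank_le
  have h₄ := Submodule.finrank_mono (inf_le_left : A.flat S₁ ⊓ A.flat S₂ ≤ A.flat S₁)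
  have h₅ := Submodule.finrank_mono (inf_le_right : A.flat S₁ ⊓ A.flat S₂ ≤ A.flat S₂)
  change ℓ - Module.finrank ℝ (A.flat (S₁ ∪ S₂)) =
    (ℓ - Module.finrank ℝ (A.flat S₁)) + (ℓ - Module.finrank ℝ (A.flat S₂)) ↔ _
  rw [hinf]
  have hℓ : Module.finrank ℝ (Fin ℓ → ℝ) = ℓ := by simp
  rw [hℓ] at h₁ h₂ h₃
  constructor
  · intro h
    apply Submodule.eq_top_of_finrank_eq
    rw [hℓ]
    omega
  · intro h
    rw [h, finrank_top, hℓ] at hdim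
    omega

/-- On a decomposable arrangement, signs on the two parts can be prescribed independently. -/
theorem exists_glue (A : Arrangement ℓ ι) {S₁ S₂ : Finset ι}
    (hu : S₁ ∪ S₂ = Finset.univ) (ht : A.flat S₁ ⊔ A.flat S₂ = ⊤) (C D : A.Ch) :
    ∃ E : A.Ch, ∀ j, A.eps j 1 E = if j ∈ S₁ then A.eps j 1 C else A.eps j 1 D := by
  obtain ⟨x, hx, rfl⟩ := A.exists_eq_chamberOf C
  obtain ⟨y, hy, rfl⟩ := A.exists_eq_chamberOf D
  obtain ⟨w₁, hw₁, w₂, hw₂, hw⟩ := Submodule.mem_sup.1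
    (ht ▸ Submodule.mem_top : x - y ∈ A.flat S₁ ⊔ A.flat S₂)
  rw [mem_flat] at hw₁ hw₂
  have e₁ : ∀ j ∈ S₁, A.form j (x - w₁) = A.form j x := fun j hj => by
    rw [map_sub, hw₁ j hj, sub_zero]
  have e₂ : ∀ j ∉ S₁, A.form j (x - w₁) = A.form j y := fun j hj => by
    have hj₂ : j ∈ S₂ := (Finset.mem_union.1 (hu ▸ Finset.mem_univ j)).resolve_left hj
    have : x - w₁ = y + w₂ := by rw [sub_eq_iff_eq_add.1 hw.symm]; abel
    rw [this, map_add, hw₂ j hj₂, add_zero]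
  have hz : x - w₁ ∈ A.Complement := fun j => by
    by_cases hj : j ∈ S₁
    · rw [e₁ j hj]; exact hx j
    · rw [e₂ j hj]; exact hy j
  refine ⟨A.chamberOf _ hz, fun j => ?_⟩
  simp only [eps_chamberOf, one_mul]
  split_ifs with hj
  · rw [e₁ j hj]
  · rw [e₂ j hj]

/-- Two distinct hyperplanes form a decomposable arrangement. -/
theorem decomposable_of_card_two (A : Arrangement ℓ ι) (h : Fintype.card ι = 2) :
    A.Decomposable := by
  obtain ⟨a, b, hab, huniv⟩ := Finset.card_eq_two.1 (Finset.card_univ.trans h)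
  have hsing : ∀ j, A.flat {j} = LinearMap.ker (A.form j) := fun j => by simp [flat]
  refine ⟨{a}, {b}, by simp, by simp, by simpa using hab, ?_, ?_⟩
  · rw [huniv]; rfl
  · have hu : (Finset.univ : Finset ι) = {a} ∪ {b} := by rw [huniv]; rfl
    rw [hu, rnkOn_add_iff, hsing, hsing]
    have hco : ∀ j, IsCoatom (LinearMap.ker (A.form j)) := fun j =>
      LinearMap.isCoatom_ker_of_surjective (LinearMap.surjective (A.form_ne_zero j))
    exact (hco a).sup_eq_top_of_ne (hco b) fun h => hab (A.ker_injective a b h)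

/-! ### Crossing circuits -/

/-- The linear combination of the defining forms with coefficients `c` over `S`. -/
def comb (A : Arrangement ℓ ι) (S : Finset ι) (c : ι → ℝ) : (Fin ℓ → ℝ) →ₗ[ℝ] ℝ :=
  ∑ j ∈ S, c j • A.form j

theorem comb_sub_smul (A : Arrangement ℓ ι) (S : Finset ι) (c e : ι → ℝ) (r : ℝ) :
    A.comb S (c - r • e) = A.comb S c - r • A.comb S e := by
  refine LinearMap.ext fun x => ?_
  simp only [comb, LinearMap.sub_apply, LinearMap.smul_apply, LinearMap.sum_apply,
    Finset.smul_sum, ← Finset.sum_sub_distrib, Pi.sub_apply, Pi.smul_apply, smul_eq_mul]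
  exact Finset.sum_congr rfl fun j _ => by ring

/-- A relation `∑ cⱼ αⱼ = 0` among the defining forms whose part supported on `P` is nonzero. -/
def IsCrossing (A : Arrangement ℓ ι) (P : Finset ι) (c : ι → ℝ) : Prop :=
  A.comb Finset.univ c = 0 ∧ A.comb P c ≠ 0

/-- The indices with nonzero coefficient. -/
def supp (c : ι → ℝ) : Finset ι := Finset.univ.filter fun j => c j ≠ 0

theorem mem_supp (c : ι → ℝ) (j : ι) : j ∈ supp c ↔ c j ≠ 0 := by simp [supp]

theorem exists_eq_sum_of_flat_le (A : Arrangement ℓ ι) (S : Finset ι) (f : (Fin ℓ → ℝ) →ₗ[ℝ] ℝ)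
    (h : A.flat S ≤ LinearMap.ker f) : ∃ a : ι → ℝ, f = ∑ j ∈ S, a j • A.form j := by
  have hmem : f ∈ Submodule.span ℝ (Set.range fun j : S => A.form j) := by
    apply mem_span_of_iInf_ker_le_ker
    intro x hx
    apply h
    rw [mem_flat]
    intro j hj
    simp only [Submodule.mem_iInf, LinearMap.mem_ker] at hx
    exact hx ⟨j, hj⟩
  obtain ⟨a, ha⟩ := (Submodule.mem_span_range_iff_exists_fun ℝ).1 hmem
  refine ⟨fun j => if hj : j ∈ S then a ⟨j, hj⟩ else 0, ?_⟩
  rw [← ha, ← Finset.sum_coe_sort S]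
  exact Finset.sum_congr rfl fun j _ => by simp

/-- If the two parts do not split the arrangement, some relation crosses between them: a
nonzero form vanishing on both flats is a combination of either part. -/
theorem exists_crossing (A : Arrangement ℓ ι) (hA : A.Indecomposable) (P : Finset ι)
    (hP : P.Nonempty) (hP' : Pᶜ.Nonempty) : ∃ c, A.IsCrossing P c := by
  have hne : A.flat P ⊔ A.flat Pᶜ ≠ ⊤ := fun h => hA
    ⟨P, Pᶜ, hP, hP', disjoint_compl_right, Finset.union_compl P, by
      rw [← Finset.union_compl P]; exact (A.rnkOn_add_iff P Pᶜ).2 h⟩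
  obtain ⟨f, hf0, hf⟩ := Submodule.exists_le_ker_of_lt_top _ (lt_top_iff_ne_top.2 hne)
  obtain ⟨a, ha⟩ := A.exists_eq_sum_of_flat_le P f (le_sup_left.trans hf)
  obtain ⟨b, hb⟩ := A.exists_eq_sum_of_flat_le Pᶜ f (le_sup_right.trans hf)
  have h₁ : A.comb P (fun j => if j ∈ P then a j else -b j) = f := by
    rw [ha]
    exact Finset.sum_congr rfl fun j hj => by simp [hj]
  have h₂ : A.comb Pᶜ (fun j => if j ∈ P then a j else -b j) = -f := by
    rw [hb, ← Finset.sum_neg_distrib]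
    exact Finset.sum_congr rfl fun j hj => by
      refine LinearMap.ext fun x => ?_
      simp [Finset.mem_compl.1 hj]
  refine ⟨fun j => if j ∈ P then a j else -b j, ?_, by rw [h₁]; exact hf0⟩
  have hsplit := Finset.sum_add_sum_compl P
    fun j => (if j ∈ P then a j else -b j) • A.form j
  unfold comb at h₁ h₂ ⊢
  rw [← hsplit, h₁, h₂, add_neg_cancel]

/-- A crossing relation of minimal support is a circuit: every relation supported on the same
indices is a multiple of it. -/
theorem exists_circuit (A : Arrangement ℓ ι) (hA : A.Indecomposable) (P : Finset ι)
    (hP : P.Nonempty) (hP' : Pᶜ.Nonempty) :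
    ∃ c, A.IsCrossing P c ∧ ∀ e, A.comb Finset.univ e = 0 → (∀ j, c j = 0 → e j = 0) →
      ∃ r : ℝ, e = r • c := by
  obtain ⟨c, hc, hmin⟩ : ∃ c, A.IsCrossing P c ∧
      ∀ d, A.IsCrossing P d → (supp c).card ≤ (supp d).card := by
    have hex : ∃ n, ∃ c, A.IsCrossing P c ∧ (supp c).card = n :=
      let ⟨c, hc⟩ := A.exists_crossing hA P hP hP'
      ⟨_, c, hc, rfl⟩
    obtain ⟨c, hc, hn⟩ := Nat.find_spec hex
    exact ⟨c, hc, fun d hd => hn ▸ Nat.find_min' hex ⟨d, hd, rfl⟩⟩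
  have hsmall : ∀ d, A.IsCrossing P d → (∀ j, c j = 0 → d j = 0) →
      ∀ a, c a ≠ 0 → d a ≠ 0 := by
    intro d hd hsub a ha hda
    refine absurd (hmin d hd) (not_le.2 (Finset.card_lt_card ⟨fun j hj => ?_, fun h => ?_⟩))
    · rw [mem_supp] at hj ⊢
      exact fun h => hj (hsub j h)
    · exact (mem_supp d a).1 (h ((mem_supp c a).2 ha)) hda
  refine ⟨c, hc, fun e he hsub => ?_⟩
  obtain ⟨a, ha⟩ : ∃ a, c a ≠ 0 := by
    by_contra! h
    exact hc.2 (by simp [comb, h])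
  -- Subtracting a multiple of `c` from `e` kills the coefficient at `a`.
  set e' : ι → ℝ := e - (e a / c a) • c with he'
  have he'rel : A.comb Finset.univ e' = 0 := by rw [comb_sub_smul, he, hc.1]; simp
  have he'sub : ∀ j, c j = 0 → e' j = 0 := fun j hj => by simp [he', hj, hsub j hj]
  have he'a : e' a = 0 := by simp [he', ha]
  have he'P : A.comb P e' = 0 := by
    by_contra h
    exact hsmall e' ⟨he'rel, h⟩ he'sub a ha he'a
  refine ⟨e a / c a, sub_eq_zero.1 ?_⟩
  funext b
  by_contra hb
  change e' b ≠ 0 at hb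
  -- Otherwise subtracting a multiple of `e'` from `c` shrinks the support of `c`.
  refine hsmall (c - (c b / e' b) • e') ⟨?_, ?_⟩ (fun j hj => ?_) b
    (fun h => hb (he'sub b h)) ?_
  · rw [comb_sub_smul, hc.1, he'rel]; simp
  · rw [comb_sub_smul, he'P]; simpa using hc.2
  · simp [hj, he'sub j hj]
  · simp [hb]

/-- Values on the support of a circuit are realized by a point as soon as they satisfy the
relation of that circuit. -/
theorem exists_point (A : Arrangement ℓ ι) (c : ι → ℝ)
    (huniq : ∀ e, A.comb Finset.univ e = 0 → (∀ j, c j = 0 → e j = 0) → ∃ r : ℝ, e = r • c)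
    (t : ι → ℝ) (ht : ∑ j, c j * t j = 0) :
    ∃ x, ∀ j, c j ≠ 0 → A.form j x = t j := by
  -- The vectors vanishing on the support of `c`: values off the support are unconstrained.
  let K : Submodule ℝ (ι → ℝ) := ⨅ j ∈ supp c, LinearMap.ker (LinearMap.proj j)
  have hK : ∀ v, v ∈ K ↔ ∀ j, c j ≠ 0 → v j = 0 := fun v => by
    simp [K, Submodule.mem_iInf, mem_supp]
  by_cases hmem : t ∈ LinearMap.range (LinearMap.pi A.form) ⊔ K
  · obtain ⟨_, ⟨x, rfl⟩, w, hw, hsum⟩ := Submodule.mem_sup.1 hmem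
    refine ⟨x, fun j hj => ?_⟩
    rw [← hsum, Pi.add_apply, (hK w).1 hw j hj, add_zero]
    rfl
  · exfalso
    obtain ⟨g, hgt, hg⟩ := Submodule.exists_le_ker_of_notMem hmem
    have hgv : ∀ v : ι → ℝ, g v = ∑ j, v j * g (Pi.single j 1) := fun v => by
      conv_lhs => rw [pi_eq_sum_univ' v]
      simp [map_sum]
    obtain ⟨r, hr⟩ := huniq (fun j => g (Pi.single j 1)) (by
        refine LinearMap.ext fun x => ?_
        have : g (LinearMap.pi A.form x) = 0 := hg (Submodule.mem_sup_left ⟨x, rfl⟩)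
        rw [hgv] at this
        simp only [comb, LinearMap.sum_apply, LinearMap.smul_apply, smul_eq_mul,
          LinearMap.zero_apply]
        rw [← this]
        exact Finset.sum_congr rfl fun j _ => mul_comm _ _) (fun j hj => by
        refine hg (Submodule.mem_sup_right ((hK _).2 fun k hk => ?_))
        rw [Pi.single_eq_of_ne]
        rintro rfl
        exact hk hj)
    apply hgt
    rw [hgv]
    calc ∑ j, t j * g (Pi.single j 1) = ∑ j, t j * (r * c j) :=
          Finset.sum_congr rfl fun j _ => by rw [congrFun hr j]; rfl
      _ = r * ∑ j, c j * t j := by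
          rw [Finset.mul_sum]; exact Finset.sum_congr rfl fun j _ => by ring
      _ = 0 := by rw [ht, mul_zero]

/-- On a circuit, every sign vector other than the two forbidden ones (constant after twisting
by the signs of the coefficients) is realized by a chamber. -/
theorem exists_chamber_on_circuit (A : Arrangement ℓ ι) (c : ι → ℝ)
    (huniq : ∀ e, A.comb Finset.univ e = 0 → (∀ j, c j = 0 → e j = 0) → ∃ r : ℝ, e = r • c)
    (s : ι → ℤˣ) (hp : ∃ j ∈ supp c, s j = 1) (hn : ∃ j ∈ supp c, s j ≠ 1) :
    ∃ C : A.Ch, ∀ j ∈ supp c, A.eps j (sgn (c j)) C = s j := by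
  have hp' : 0 < ((supp c).filter fun j => s j = 1).card :=
    Finset.card_pos.2 (hp.imp fun j hj => Finset.mem_filter.2 hj)
  have hn' : 0 < ((supp c).filter fun j => ¬ s j = 1).card :=
    Finset.card_pos.2 (hn.imp fun j hj => Finset.mem_filter.2 hj)
  set p := ((supp c).filter fun j => s j = 1).card
  set n := ((supp c).filter fun j => ¬ s j = 1).card
  -- `u j` is the value of `c j * α j`: `n` on the `p` positive indices, `-p` on the `n` others.
  let u : ι → ℝ := fun j => if s j = 1 then (n : ℝ) else -(p : ℝ)
  have husgn : ∀ j, u j ≠ 0 ∧ sgn (u j) = s j := fun j => by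
    by_cases h : s j = 1
    · have : 0 < u j := by simp only [u, if_pos h]; exact_mod_cast hn'
      exact ⟨this.ne', by rw [sgn_of_pos this, h]⟩
    · have : u j < 0 := by simp only [u, if_neg h]; simpa using hp'
      exact ⟨this.ne, by rw [sgn_of_neg this, units_eq_neg_one h]⟩
  have hsum : ∑ j ∈ supp c, u j = 0 := by
    simp only [u]
    rw [Finset.sum_ite, Finset.sum_const, Finset.sum_const, nsmul_eq_mul, nsmul_eq_mul]
    change (p : ℝ) * n + n * -(p : ℝ) = 0
    ring
  obtain ⟨x, hx⟩ := A.exists_point c huniq (fun j => u j / c j) (by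
    rw [← hsum, supp, Finset.sum_filter]
    refine Finset.sum_congr rfl fun j _ => ?_
    split_ifs with h
    · field_simp
    · rw [not_not.1 h, zero_mul])
  obtain ⟨y, hy, hyx⟩ := A.exists_perturb x
  refine ⟨A.chamberOf y hy, fun j hj => ?_⟩
  have hcj := (mem_supp c j).1 hj
  have hxj : A.form j x ≠ 0 := by rw [hx j hcj]; exact div_ne_zero (husgn j).1 hcj
  rw [eps_chamberOf, hyx j hxj, ← sgn_mul hcj hxj, hx j hcj, mul_div_cancel₀ _ hcj,
    (husgn j).2]

/-- The twisted sign vector of a chamber is never constant on the support of a relation. -/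
theorem not_const_on_circuit (A : Arrangement ℓ ι) (c : ι → ℝ)
    (hc : A.comb Finset.univ c = 0) (hne : (supp c).Nonempty) (C : A.Ch) (s : ℤˣ) :
    ¬ ∀ j ∈ supp c, A.eps j (sgn (c j)) C = s := by
  obtain ⟨y, hy, rfl⟩ := A.exists_eq_chamberOf C
  intro h
  have hs : ∀ j ∈ supp c, sgn (c j * A.form j y) = s := fun j hj => by
    rw [sgn_mul ((mem_supp c j).1 hj) (hy j), ← h j hj, eps_chamberOf]
  have hsum : ∑ j ∈ supp c, c j * A.form j y = 0 := by
    have := congrArg (fun f => f y) hc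
    simp only [comb, LinearMap.sum_apply, LinearMap.smul_apply, smul_eq_mul,
      LinearMap.zero_apply] at this
    rw [← this, supp, Finset.sum_filter]
    refine Finset.sum_congr rfl fun j _ => ?_
    split_ifs with h
    · rfl
    · rw [not_not.1 h, zero_mul]
  by_cases h1 : s = 1
  · exact (Finset.sum_pos (fun j hj => pos_of_sgn_eq_one ((hs j hj).trans h1)) hne).ne' hsum
  · refine (Finset.sum_neg (fun j hj => neg_of_sgn_ne_one ?_ ?_) hne).ne hsum
    · exact mul_ne_zero ((mem_supp c j).1 hj) (hy j)
    · rw [hs j hj]; exact h1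

/-! ### Polymorphisms of the not-all-equal relation -/

/-- A self-dual function `B^m → B` with `f(+,…,+) = +` which preserves the ternary
not-all-equal relation is a projection: the sets on whose indicator `f` is `+` form an
ultrafilter on a finite set. -/
theorem exists_eq_eval {m : ℕ} (f : (Fin m → ℤˣ) → ℤˣ) (h1 : f (fun _ => 1) = 1)
    (hneg : ∀ x, f (-x) = -f x)
    (hnae : ∀ x y z : Fin m → ℤˣ, (∀ i, ¬ (x i = y i ∧ x i = z i)) →
      ¬ (f x = f y ∧ f x = f z)) : ∃ i, ∀ x, f x = x i := by
  let ind : Set (Fin m) → Fin m → ℤˣ := fun T i => if i ∈ T then 1 else -1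
  have hcompl : ∀ T, ind Tᶜ = -ind T := fun T => by
    funext i
    by_cases hi : i ∈ T <;> simp [ind, hi]
  have hfc : ∀ T, f (ind Tᶜ) = 1 ↔ ¬ f (ind T) = 1 := fun T => by
    rw [hcompl, hneg]
    rcases Int.units_eq_one_or (f (ind T)) with h | h <;> rw [h] <;> decide
  have hinter : ∀ S T, f (ind S) = 1 → f (ind T) = 1 → f (ind (S ∩ T)) = 1 := by
    intro S T hS hT
    by_contra hST
    refine hnae (ind S) (ind T) (ind (S ∩ T)ᶜ) (fun i => ?_)
      ⟨hS.trans hT.symm, hS.trans ((hfc _).2 hST).symm⟩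
    by_cases hiS : i ∈ S <;> by_cases hiT : i ∈ T <;> simp [ind, hiS, hiT]
  have huniv : f (ind Set.univ) = 1 := by simpa [ind] using h1
  have hempty : ¬ f (ind ∅) = 1 := by
    have := (hfc ∅).1 (by simpa using huniv)
    exact this
  let F : Filter (Fin m) :=
    { sets := {T | f (ind T) = 1}
      univ_sets := huniv
      sets_of_superset := by
        intro S T hS hST
        by_contra hT
        have := hinter S Tᶜ hS ((hfc T).2 hT)
        rw [← Set.sdiff_eq, Set.sdiff_eq_empty.2 hST] at this
        exact hempty this
      inter_sets := fun {S T} hS hT => hinter S T hS hT }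
  have hF : ∀ T, T ∈ F ↔ f (ind T) = 1 := fun T => Iff.rfl
  let U : Ultrafilter (Fin m) := Ultrafilter.ofComplNotMemIff F fun T => by
    rw [hF, hF, hfc, not_not]
  obtain ⟨i, hi⟩ := U.eq_pure_of_finite
  refine ⟨i, fun x => ?_⟩
  have hx : ind {k | x k = 1} = x := by
    funext k
    by_cases hk : x k = 1
    · simp [ind, hk]
    · simp [ind, units_eq_neg_one hk]
  have hmem : f x = 1 ↔ x i = 1 := by
    have h₁ : {k | x k = 1} ∈ U ↔ f (ind {k | x k = 1}) = 1 := Iff.rfl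
    rw [hx] at h₁
    rw [← h₁, hi]
    exact Ultrafilter.mem_pure
  by_cases h : x i = 1
  · rw [h, hmem.2 h]
  · rw [units_eq_neg_one h, units_eq_neg_one fun h' => h (hmem.1 h')]

/-- A family of unanimous functions `f j` which jointly preserves the not-all-equal relation on
at least three indices consists of one and the same projection. -/
theorem exists_common_eval {κ : Type} {m : ℕ} (S : Finset κ) (f : κ → (Fin m → ℤˣ) → ℤˣ)
    (h1 : ∀ j, f j (fun _ => 1) = 1) (h2 : ∀ j, f j (fun _ => -1) = -1)
    (hnae : ∀ x : κ → Fin m → ℤˣ, (∀ i s, ¬ ∀ j ∈ S, x j i = s) →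
      ∀ s, ¬ ∀ j ∈ S, f j (x j) = s)
    {a b c : κ} (ha : a ∈ S) (hb : b ∈ S) (hc : c ∈ S) (hab : a ≠ b) (hac : a ≠ c)
    (hbc : b ≠ c) : ∃ i, ∀ j ∈ S, ∀ x, f j x = x i := by
  have hpair : ∀ j ∈ S, ∀ k ∈ S, j ≠ k → ∀ x, f k (-x) = -f j x := by
    intro j hj k hk hjk x
    -- Opposite inputs at `j` and `k` are compatible with any constant at the other indices.
    have key : ∀ s : ℤˣ, ¬ (f j x = s ∧ f k (-x) = s) := by
      rintro s ⟨hjs, hks⟩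
      refine hnae (fun l => if l = j then x else if l = k then -x else fun _ => s)
        (fun i t h => ?_) s fun l _ => ?_
      · have e₁ := h j hj
        have e₂ := h k hk
        simp only [if_pos, if_neg hjk.symm, Pi.neg_apply] at e₁ e₂
        rw [← e₁] at e₂
        exact absurd e₂ (by
          rcases Int.units_eq_one_or (x i) with h | h <;> rw [h] <;> decide)
      · by_cases hlj : l = j
        · simp [hlj, hjs]
        · by_cases hlk : l = k
          · subst hlk
            simp [hlj, hks]
          · simp only [if_neg hlj, if_neg hlk]
            rcases Int.units_eq_one_or s with rfl | rfl
            · exact h1 l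
            · exact h2 l
    by_cases h : f j x = 1
    · rw [h]
      exact units_eq_neg_one fun h' => key 1 ⟨h, h'⟩
    · rw [units_eq_neg_one h, neg_neg]
      by_contra h'
      exact key (-1) ⟨units_eq_neg_one h, units_eq_neg_one h'⟩
  have hthird : ∀ j ∈ S, ∀ k ∈ S, ∀ l ∈ S, j ≠ l → k ≠ l → ∀ x, f j x = f k x := by
    intro j hj k hk l hl hjl hkl x
    have e₁ := hpair j hj l hl hjl x
    have e₂ := hpair k hk l hl hkl x
    rw [e₁] at e₂
    exact neg_injective e₂
  have hall : ∀ j ∈ S, ∀ x, f j x = f a x := by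
    intro j hj
    by_cases hjb : j = b
    · exact hthird j hj a ha c hc (hjb ▸ hbc) hac
    · exact hthird j hj a ha b hb hjb hab
  obtain ⟨i, hi⟩ := exists_eq_eval (f a) (h1 a)
    (fun x => by rw [← hall b hb (-x)]; exact hpair a ha b hb hab x) (by
      rintro x y z hxyz ⟨hxy, hxz⟩
      refine hnae (fun l => if l = a then x else if l = b then y else z) (fun i s h => ?_)
        (f a x) fun l hl => ?_
      · have e₁ := h a ha
        have e₂ := h b hb
        have e₃ := h c hc
        simp only [if_pos, if_neg hab.symm, if_neg hac.symm, if_neg hbc.symm] at e₁ e₂ e₃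
        exact hxyz i ⟨e₁.trans e₂.symm, e₁.trans e₃.symm⟩
      · rw [hall l hl]
        split_ifs
        · rfl
        · exact hxy.symm
        · exact hxz.symm)
  exact ⟨i, fun j hj x => (hall j hj x).trans (hi x)⟩

/-! ### Admissible maps -/

/-- An admissible map is unanimous at every hyperplane. -/
theorem IsAdmissible.unanimous {A : Arrangement ℓ ι} {m : ℕ} {Φ : (Fin m → A.Ch) → A.Ch}
    (hΦ : A.IsAdmissible m Φ) (j : ι) (s : ℤˣ) (𝒞 : Fin m → A.Ch)
    (h : ∀ i, A.eps j 1 (𝒞 i) = s) : A.eps j 1 (Φ 𝒞) = s := by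
  obtain ⟨φ, hφ1, hφ⟩ := hΦ
  have e := hφ j s 𝒞
  have hs : (fun i => A.eps j s (𝒞 i)) = fun _ => 1 := by
    funext i
    rw [eps_eq_mul, h i, Int.units_mul_self]
  rw [hs, hφ1, eps_eq_mul] at e
  rw [← Int.units_inv_eq_self s]
  exact eq_inv_of_mul_eq_one_right e

/-- In an indecomposable arrangement, every proper nonempty index set is crossed by a
circuit, of length at least three, on which an admissible map acts as one projection. -/
theorem IsAdmissible.exists_common {A : Arrangement ℓ ι} {m : ℕ} {Φ : (Fin m → A.Ch) → A.Ch}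
    (hΦ : A.IsAdmissible m Φ) (hA : A.Indecomposable)
    (P : Finset ι) (hP : P.Nonempty) (hP' : Pᶜ.Nonempty) :
    ∃ a ∈ P, ∃ b ∉ P, ∃ i, ∀ 𝒞 : Fin m → A.Ch,
      A.eps a 1 (Φ 𝒞) = A.eps a 1 (𝒞 i) ∧ A.eps b 1 (Φ 𝒞) = A.eps b 1 (𝒞 i) := by
  obtain ⟨c, hc, huniq⟩ := A.exists_circuit hA P hP hP'
  obtain ⟨a, haP, ha⟩ : ∃ a ∈ P, c a ≠ 0 := by
    by_contra! h
    exact hc.2 (Finset.sum_eq_zero fun j hj => by rw [h j hj, zero_smul])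
  obtain ⟨b, hbP, hb⟩ : ∃ b ∉ P, c b ≠ 0 := by
    by_contra! h
    apply hc.2
    rw [← hc.1]
    exact Finset.sum_subset (Finset.subset_univ P) fun j _ hj => by rw [h j hj, zero_smul]
  have hab : a ≠ b := fun h => hbP (h ▸ haP)
  -- A relation between only two forms would make their kernels coincide.
  obtain ⟨d, hda, hdb, hd⟩ : ∃ d, d ≠ a ∧ d ≠ b ∧ c d ≠ 0 := by
    by_contra! h
    have hrel : ∀ x, c a * A.form a x + c b * A.form b x = 0 := fun x => by
      have := congrArg (fun f => f x) hc.1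
      simp only [comb, LinearMap.sum_apply, LinearMap.smul_apply, smul_eq_mul,
        LinearMap.zero_apply] at this
      rw [← this]
      exact (Fintype.sum_eq_add (f := fun j => c j * A.form j x) a b hab
        fun j hj => by rw [h j hj.1 hj.2, zero_mul]).symm
    refine hab (A.ker_injective a b (Submodule.ext fun x => ?_))
    have hx := hrel x
    simp only [LinearMap.mem_ker]
    constructor <;> intro h0 <;> rw [h0] at hx <;> simpa [ha, hb] using hx
  have hun := hΦ.unanimous
  obtain ⟨φ, hφ1, hφ⟩ := hΦ
  obtain ⟨i, hi⟩ := exists_common_eval (supp c) (fun j => φ j (sgn (c j)))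
    (fun j => hφ1 j _) (fun j => by
      obtain ⟨C, hC⟩ := A.exists_eps_eq j (-sgn (c j))
      have e := hφ j (sgn (c j)) fun _ => C
      rw [eps_eq_mul, hun j (-sgn (c j)) (fun _ => C) fun _ => hC] at e
      simp only [A.eps_eq_mul j (sgn (c j)), hC, mul_neg, Int.units_mul_self] at e
      exact e.symm)
    (by
      intro x hx s hs
      have hex : ∀ i, ∃ C : A.Ch, ∀ j ∈ supp c, A.eps j (sgn (c j)) C = x j i := fun i => by
        refine A.exists_chamber_on_circuit c huniq (fun j => x j i) ?_ ?_
        · by_contra! h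
          exact hx i (-1) fun j hj => units_eq_neg_one (h j hj)
        · by_contra! h
          exact hx i 1 h
      choose 𝒞 h𝒞 using hex
      refine A.not_const_on_circuit c hc.1 ⟨a, (mem_supp c a).2 ha⟩ (Φ 𝒞) s fun j hj => ?_
      rw [hφ, ← hs j hj]
      congr 1
      funext i
      exact h𝒞 i j hj)
    ((mem_supp c a).2 ha) ((mem_supp c b).2 hb) ((mem_supp c d).2 hd) hab hda.symm hdb.symm
  have hfin : ∀ j, c j ≠ 0 → ∀ 𝒞 : Fin m → A.Ch, A.eps j 1 (Φ 𝒞) = A.eps j 1 (𝒞 i) := by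
    intro j hj 𝒞
    have e := hφ j (sgn (c j)) 𝒞
    rw [hi j ((mem_supp c j).2 hj), eps_eq_mul, A.eps_eq_mul j _ (𝒞 i)] at e
    exact mul_left_cancel e
  exact ⟨a, haP, b, hbP, i, fun 𝒞 => ⟨hfin a ha 𝒞, hfin b hb 𝒞⟩⟩

/-- Different projections disagree at every hyperplane. -/
theorem proj_injective (A : Arrangement ℓ ι) {m : ℕ} (j : ι) {h i : Fin m}
    (e : ∀ 𝒞 : Fin m → A.Ch, A.eps j 1 (𝒞 h) = A.eps j 1 (𝒞 i)) : h = i := by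
  by_contra hne
  obtain ⟨C, hC⟩ := A.exists_eps_eq j 1
  obtain ⟨D, hD⟩ := A.exists_eps_eq j (-1)
  have := e fun k => if k = h then C else D
  rw [if_pos rfl, if_neg (Ne.symm hne), hC, hD] at this
  exact absurd this (by decide)

theorem IsAdmissible.eq_proj {A : Arrangement ℓ ι} [Nonempty ι] {m : ℕ}
    {Φ : (Fin m → A.Ch) → A.Ch}
    (hΦ : A.IsAdmissible m Φ) (hA : A.Indecomposable) (hcard : 3 ≤ Fintype.card ι) :
    ∃ h : Fin m, Φ = fun 𝒞 => 𝒞 h := by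
  have j₀ : ι := Classical.arbitrary ι
  obtain ⟨a, _, _, _, h, hah⟩ := hΦ.exists_common hA {j₀} (Finset.singleton_nonempty j₀) (by
    rw [← Finset.card_pos, Finset.card_compl, Finset.card_singleton]
    omega)
  -- The hyperplanes on which `Φ` is the `h`-th projection.
  let P : Finset ι := Finset.univ.filter fun j =>
    ∀ 𝒞 : Fin m → A.Ch, A.eps j 1 (Φ 𝒞) = A.eps j 1 (𝒞 h)
  have hP : ∀ j, j ∈ P ↔ ∀ 𝒞 : Fin m → A.Ch, A.eps j 1 (Φ 𝒞) = A.eps j 1 (𝒞 h) := by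
    simp [P]
  have hall : Pᶜ = ∅ := by
    by_contra hne
    obtain ⟨p, hp, q, hq, i, hi⟩ := hΦ.exists_common hA P
      ⟨a, (hP a).2 fun 𝒞 => (hah 𝒞).1⟩ (Finset.nonempty_iff_ne_empty.2 hne)
    have hhi : h = i := A.proj_injective p fun 𝒞 => by
      rw [← (hP p).1 hp, (hi 𝒞).1]
    subst hhi
    exact hq ((hP q).2 fun 𝒞 => (hi 𝒞).2)
  refine ⟨h, funext fun 𝒞 => A.ch_ext fun j => (hP j).1 ?_ 𝒞⟩
  rw [Finset.compl_eq_empty_iff] at hall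
  rw [hall]
  exact Finset.mem_univ j

/-- To be admissible it suffices that each sign of `Φ 𝒞` is obtained from the corresponding
signs of `𝒞` by a unanimous function. -/
theorem isAdmissible_of (A : Arrangement ℓ ι) {m : ℕ} (Φ : (Fin m → A.Ch) → A.Ch)
    (f : ι → (Fin m → ℤˣ) → ℤˣ) (hf : ∀ j s, f j (fun _ => s) = s)
    (hΦ : ∀ j 𝒞, A.eps j 1 (Φ 𝒞) = f j fun i => A.eps j 1 (𝒞 i)) : A.IsAdmissible m Φ := by
  refine ⟨fun j σ v => σ * f j fun i => σ * v i, fun j σ => ?_, fun j σ 𝒞 => ?_⟩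
  · simp only [mul_one, hf, Int.units_mul_self]
  · rw [eps_eq_mul, hΦ]
    congr 2
    funext i
    dsimp only
    rw [A.eps_eq_mul j σ, ← mul_assoc, Int.units_mul_self, one_mul]

/-- On a decomposable arrangement, combining the first two projections on the two parts gives
an admissible map that is not projective. -/
theorem exists_not_proj_of_decomposable (A : Arrangement ℓ ι) {m : ℕ} (hm : 2 ≤ m)
    (hA : A.Decomposable) :
    ∃ Φ : (Fin m → A.Ch) → A.Ch, A.IsAdmissible m Φ ∧ ¬ ∃ h : Fin m, Φ = fun 𝒞 => 𝒞 h := by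
  obtain ⟨S₁, S₂, ⟨a, ha⟩, ⟨b, hb⟩, hd, hu, hr⟩ := hA
  rw [← hu, rnkOn_add_iff] at hr
  choose glue hglue using A.exists_glue hu hr
  let i₀ : Fin m := ⟨0, by omega⟩
  let i₁ : Fin m := ⟨1, by omega⟩
  refine ⟨fun 𝒞 => glue (𝒞 i₀) (𝒞 i₁), A.isAdmissible_of _
    (fun j v => if j ∈ S₁ then v i₀ else v i₁) (fun j s => ite_self s)
    fun j 𝒞 => hglue _ _ j, ?_⟩
  rintro ⟨h, hh⟩
  have e₀ : i₀ = h := A.proj_injective a fun 𝒞 => by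
    rw [← congrFun hh 𝒞, hglue, if_pos ha]
  have e₁ : i₁ = h := A.proj_injective b fun 𝒞 => by
    rw [← congrFun hh 𝒞, hglue, if_neg fun hb' => Finset.disjoint_left.1 hd hb' hb]
  exact absurd (congrArg Fin.val (e₀.trans e₁.symm)) (by simp [i₀, i₁])

/-- For a single hyperplane, the maximum of the first two signs gives an admissible map that is
not projective. -/
theorem exists_not_proj_of_card_one (A : Arrangement ℓ ι) {m : ℕ} (hm : 2 ≤ m)
    (hcard : Fintype.card ι = 1) :
    ∃ Φ : (Fin m → A.Ch) → A.Ch, A.IsAdmissible m Φ ∧ ¬ ∃ h : Fin m, Φ = fun 𝒞 => 𝒞 h := by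
  obtain ⟨a, ha⟩ := Fintype.card_eq_one_iff.1 hcard
  let i₀ : Fin m := ⟨0, by omega⟩
  let i₁ : Fin m := ⟨1, by omega⟩
  have h01 : i₁ ≠ i₀ := fun h => absurd (congrArg Fin.val h) (by simp [i₀, i₁])
  refine ⟨fun 𝒞 => if A.eps a 1 (𝒞 i₀) = 1 then 𝒞 i₀ else 𝒞 i₁, A.isAdmissible_of _
    (fun j v => if v i₀ = 1 then v i₀ else v i₁) (fun j s => ite_self s) fun j 𝒞 => ?_, ?_⟩
  · rw [ha j]
    exact apply_ite (A.eps a 1) _ _ _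
  · rintro ⟨h, hh⟩
    obtain ⟨C, hC⟩ := A.exists_eps_eq a 1
    obtain ⟨D, hD⟩ := A.exists_eps_eq a (-1)
    have hDC : A.eps a 1 D ≠ A.eps a 1 C := by rw [hC, hD]; decide
    have hDC' : D ≠ C := fun e => hDC (by rw [e])
    have hD1 : ¬ A.eps a 1 D = 1 := by rw [hD]; decide
    -- A single `+` in position `0` or in position `1` already makes the maximum `+`.
    have e₀ := congrFun hh fun k => if k = i₀ then C else D
    have e₁ := congrFun hh fun k => if k = i₁ then C else D
    simp only [if_true, hC] at e₀
    simp only [if_neg h01.symm, if_neg hD1, if_true] at e₁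
    have h₀ : h = i₀ := by
      by_contra hne
      rw [if_neg hne] at e₀
      exact hDC' e₀.symm
    have h₁ : h = i₁ := by
      by_contra hne
      rw [if_neg hne] at e₁
      exact hDC' e₁.symm
    exact h01 (h₁.symm.trans h₀)

end Arrangement

/-- **Corollary.** For a nonempty real central arrangement `𝒜` and a positive integer `m`,
every admissible map is projective iff `m = 1` or (`𝒜` is indecomposable and `|𝒜| ≥ 3`). -/
theorem every_admissible_projective_iff {ℓ : ℕ} {ι : Type} [Fintype ι] [Nonempty ι]
    (A : Arrangement ℓ ι) (m : ℕ) (hm : 0 < m) :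
    (∀ Φ : (Fin m → A.Ch) → A.Ch, A.IsAdmissible m Φ → ∃ h : Fin m, Φ = fun 𝒞 => 𝒞 h) ↔
      (m = 1 ∨ (A.Indecomposable ∧ 3 ≤ Fintype.card ι)) := by
  constructor
  · intro H
    by_cases hm1 : m = 1
    · exact Or.inl hm1
    have hm2 : 2 ≤ m := by omega
    have hind : A.Indecomposable := fun hdec =>
      let ⟨Φ, hΦ, hnot⟩ := A.exists_not_proj_of_decomposable hm2 hdec
      hnot (H Φ hΦ)
    refine Or.inr ⟨hind, ?_⟩
    by_contra hcard
    have hpos : 0 < Fintype.card ι := Fintype.card_pos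
    rcases (by omega : Fintype.card ι = 1 ∨ Fintype.card ι = 2) with h | h
    · obtain ⟨Φ, hΦ, hnot⟩ := A.exists_not_proj_of_card_one hm2 h
      exact hnot (H Φ hΦ)
    · exact hind (A.decomposable_of_card_two h)
  · rintro (rfl | ⟨hA, hcard⟩) Φ hΦ
    · refine ⟨0, funext fun 𝒞 => A.ch_ext fun j => hΦ.unanimous j _ 𝒞 fun i => ?_⟩
      rw [Subsingleton.elim i 0]
    · exact hΦ.eq_proj hA hcard
end
end

section
/- Suppose 𝒜 = 𝒜₁ ⊎ 𝒜₂ with 𝒜₁ and 𝒜₂ nonempty, and let m be a positive integer. Then the map α : Ch(𝒜₁)^m × Ch(𝒜₂)^m → Ch(𝒜₁ ⊎ 𝒜₂)^m given by α(C₁,…,C_m, D₁,…,D_m) = (C₁ ∩ D₁, …, C_m ∩ D_m), for C_i ∈ Ch(𝒜₁) and D_i ∈ Ch(𝒜₂), is bijective. -/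
/-!
The chamber of a point `x` of the complement is the set of points at which every form has the
same sign as at `x`: this set is convex, and a connected subset of the complement cannot meet
both sides of a hyperplane (`connectedComponentIn_eq_signCell`). Hence chambers are determined
by any of their points, and for `z` in the complement of `𝒜` the chamber of `z` is the
intersection of its chambers with respect to `𝒜₁` and `𝒜₂`. This gives injectivity and
surjectivity once it is known that `C ∩ D` is never empty.

Nonemptiness is where additivity of the rank enters. If `K₁`, `K₂` are the intersections of the
hyperplanes of `𝒜₁`, `𝒜₂`, then `r(𝒜) = r(𝒜₁) + r(𝒜₂)` forces `K₁ + K₂ = ℝ^ℓ` by a dimension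
count. For `x ∈ C`, `y ∈ D` write `x - y = k₁ + k₂`; the point `x - k₁ = y + k₂` has the same
values as `x` on the forms of `𝒜₁` and the same values as `y` on those of `𝒜₂`
(`exists_common_point`).
-/

noncomputable section
attribute [local instance] Classical.propDecidable

namespace Arrangement

/-- The points lying strictly on the same side as `x` of every hyperplane. -/
def signCell {ℓ : ℕ} {ι : Type} [Fintype ι] (A : Arrangement ℓ ι) (x : Fin ℓ → ℝ) :
    Set (Fin ℓ → ℝ) :=
  {y | ∀ j, 0 < A.form j x * A.form j y}

theorem connectedComponentIn_eq_signCell {ℓ : ℕ} {ι : Type} [Fintype ι] (A : Arrangement ℓ ι)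
    {x : Fin ℓ → ℝ} (hx : x ∈ A.Complement) :
    connectedComponentIn A.Complement x = A.signCell x := by
  apply Set.Subset.antisymm
  · intro y hy j
    by_contra hneg
    have hpre : IsPreconnected (connectedComponentIn A.Complement x) :=
      isPreconnected_connectedComponentIn
    have hcont : ContinuousOn (fun z => A.form j x * A.form j z)
        (connectedComponentIn A.Complement x) :=
      (continuous_const.mul (A.form j).continuous_of_finiteDimensional).continuousOn
    have hxx : 0 < A.form j x * A.form j x := mul_self_pos.2 (hx j)
    -- By the intermediate value theorem the form would vanish somewhere on the component.
    obtain ⟨z, hz, hz0⟩ := hpre.intermediate_value hy (mem_connectedComponentIn hx) hcont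
      ⟨not_lt.1 hneg, hxx.le⟩
    have hzc : z ∈ A.Complement := connectedComponentIn_subset _ _ hz
    exact mul_ne_zero (hx j) (hzc j) hz0
  · have hconv : Convex ℝ (A.signCell x) := by
      intro y hy z hz a b ha hb hab j
      have h1 := hy j
      have h2 := hz j
      have heq : A.form j x * A.form j (a • y + b • z) =
          a * (A.form j x * A.form j y) + b * (A.form j x * A.form j z) := by
        simp only [map_add, map_smul, smul_eq_mul]
        ring
      rw [heq]
      rcases ha.eq_or_lt with rfl | ha'
      · have hb1 : b = 1 := by linarith
        simpa [hb1] using h2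
      · exact add_pos_of_pos_of_nonneg (mul_pos ha' h1) (mul_nonneg hb h2.le)
    refine hconv.isPreconnected.subset_connectedComponentIn ?_ ?_
    · exact fun j => mul_self_pos.2 (hx j)
    · exact fun y hy j => right_ne_zero_of_mul (hy j).ne'

theorem IsChamber.nonempty {ℓ : ℕ} {ι : Type} [Fintype ι] {A : Arrangement ℓ ι}
    {C : Set (Fin ℓ → ℝ)} (hC : A.IsChamber C) : C.Nonempty := by
  obtain ⟨x, hx, rfl⟩ := hC
  exact ⟨x, mem_connectedComponentIn hx⟩

theorem IsChamber.subset_complement {ℓ : ℕ} {ι : Type} [Fintype ι] {A : Arrangement ℓ ι}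
    {C : Set (Fin ℓ → ℝ)} (hC : A.IsChamber C) : C ⊆ A.Complement := by
  obtain ⟨x, hx, rfl⟩ := hC
  exact connectedComponentIn_subset _ _

theorem IsChamber.eq_signCell {ℓ : ℕ} {ι : Type} [Fintype ι] {A : Arrangement ℓ ι}
    {C : Set (Fin ℓ → ℝ)} (hC : A.IsChamber C) {z : Fin ℓ → ℝ} (hz : z ∈ C) :
    C = A.signCell z := by
  rw [← connectedComponentIn_eq_signCell A (hC.subset_complement hz)]
  obtain ⟨x, hx, rfl⟩ := hC
  exact connectedComponentIn_eq hz

theorem isChamber_signCell {ℓ : ℕ} {ι : Type} [Fintype ι] (A : Arrangement ℓ ι)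
    {x : Fin ℓ → ℝ} (hx : x ∈ A.Complement) : A.IsChamber (A.signCell x) :=
  ⟨x, hx, (connectedComponentIn_eq_signCell A hx).symm⟩

theorem mem_signCell_self {ℓ : ℕ} {ι : Type} [Fintype ι] (A : Arrangement ℓ ι)
    {x : Fin ℓ → ℝ} (hx : x ∈ A.Complement) : x ∈ A.signCell x :=
  fun j => mul_self_pos.2 (hx j)

theorem signCell_restrict_inter {ℓ : ℕ} {ι : Type} [Fintype ι] (A : Arrangement ℓ ι)
    (S : Finset ι) (z : Fin ℓ → ℝ) :
    (A.restrict S).signCell z ∩ (A.restrict Sᶜ).signCell z = A.signCell z := by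
  ext y
  constructor
  · rintro ⟨h1, h2⟩ j
    by_cases hj : j ∈ S
    · exact h1 ⟨j, hj⟩
    · exact h2 ⟨j, Finset.mem_compl.2 hj⟩
  · exact fun h => ⟨fun j => h j.1, fun j => h j.1⟩

theorem complement_subset_restrict {ℓ : ℕ} {ι : Type} [Fintype ι] (A : Arrangement ℓ ι)
    (S : Finset ι) : A.Complement ⊆ (A.restrict S).Complement :=
  fun _ hx j => hx j.1

/-- Additivity of the rank makes the values on the two parts independent of each other. -/
theorem exists_common_point {ℓ : ℕ} {ι : Type} [Fintype ι] (A : Arrangement ℓ ι)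
    (S : Finset ι) (hr : A.rnk = A.rnkOn S + A.rnkOn Sᶜ) (x y : Fin ℓ → ℝ) :
    ∃ z, (∀ j ∈ S, A.form j z = A.form j x) ∧ ∀ j ∈ Sᶜ, A.form j z = A.form j y := by
  set K₁ : Submodule ℝ (Fin ℓ → ℝ) := ⨅ j ∈ S, LinearMap.ker (A.form j) with hK₁
  set K₂ : Submodule ℝ (Fin ℓ → ℝ) := ⨅ j ∈ Sᶜ, LinearMap.ker (A.form j) with hK₂
  have hinf : (⨅ j ∈ (Finset.univ : Finset ι), LinearMap.ker (A.form j)) = K₁ ⊓ K₂ := by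
    rw [← Finset.union_compl S, Finset.iInf_union]
  have hdim := Submodule.finrank_sup_add_finrank_inf_eq K₁ K₂
  have h1 := Submodule.finrank_le K₁
  have h2 := Submodule.finrank_le K₂
  have h12 := Submodule.finrank_le (K₁ ⊓ K₂)
  have htop : K₁ ⊔ K₂ = ⊤ := by
    apply Submodule.eq_top_of_finrank_eq
    have hsup := Submodule.finrank_le (K₁ ⊔ K₂)
    unfold rnk rnkOn at hr
    rw [hinf, ← hK₁, ← hK₂] at hr
    simp only [Module.finrank_fin_fun] at *
    omega
  have hmem : x - y ∈ K₁ ⊔ K₂ := htop ▸ Submodule.mem_top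
  obtain ⟨k₁, hk₁, k₂, hk₂, hk⟩ := Submodule.mem_sup.1 hmem
  refine ⟨x - k₁, fun j hj => ?_, fun j hj => ?_⟩
  · have h0 : A.form j k₁ = 0 := by
      simp only [hK₁, Submodule.mem_iInf, LinearMap.mem_ker] at hk₁
      exact hk₁ j hj
    rw [map_sub, h0, sub_zero]
  · have h0 : A.form j k₂ = 0 := by
      simp only [hK₂, Submodule.mem_iInf, LinearMap.mem_ker] at hk₂
      exact hk₂ j hj
    have hz : x - k₁ = y + k₂ := by
      rw [sub_eq_iff_eq_add, add_assoc, add_comm k₂, hk, add_sub_cancel]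
    rw [hz, map_add, h0, add_zero]

theorem chamber_inter_nonempty {ℓ : ℕ} {ι : Type} [Fintype ι] (A : Arrangement ℓ ι)
    (S : Finset ι) (hr : A.rnk = A.rnkOn S + A.rnkOn Sᶜ)
    (C : (A.restrict S).Ch) (D : (A.restrict Sᶜ).Ch) : (C.1 ∩ D.1).Nonempty := by
  obtain ⟨x, hx⟩ := C.2.nonempty
  obtain ⟨y, hy⟩ := D.2.nonempty
  obtain ⟨z, hzx, hzy⟩ := A.exists_common_point S hr x y
  refine ⟨z, ?_, ?_⟩
  · rw [C.2.eq_signCell hx]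
    intro j
    have h : (A.restrict S).form j z = (A.restrict S).form j x := hzx j.1 j.2
    rw [h]
    exact mul_self_pos.2 (C.2.subset_complement hx j)
  · rw [D.2.eq_signCell hy]
    intro j
    have h : (A.restrict Sᶜ).form j z = (A.restrict Sᶜ).form j y := hzy j.1 j.2
    rw [h]
    exact mul_self_pos.2 (D.2.subset_complement hy j)

theorem inter_eq_signCell {ℓ : ℕ} {ι : Type} [Fintype ι] (A : Arrangement ℓ ι)
    (S : Finset ι) (C : (A.restrict S).Ch) (D : (A.restrict Sᶜ).Ch) {z : Fin ℓ → ℝ}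
    (hz : z ∈ C.1 ∩ D.1) : C.1 ∩ D.1 = A.signCell z := by
  rw [C.2.eq_signCell hz.1, D.2.eq_signCell hz.2, signCell_restrict_inter]

theorem isChamber_inter {ℓ : ℕ} {ι : Type} [Fintype ι] (A : Arrangement ℓ ι)
    (S : Finset ι) (hr : A.rnk = A.rnkOn S + A.rnkOn Sᶜ)
    (C : (A.restrict S).Ch) (D : (A.restrict Sᶜ).Ch) : A.IsChamber (C.1 ∩ D.1) := by
  obtain ⟨z, hz⟩ := A.chamber_inter_nonempty S hr C D
  rw [A.inter_eq_signCell S C D hz]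
  refine A.isChamber_signCell fun j => ?_
  by_cases hj : j ∈ S
  · exact C.2.subset_complement hz.1 ⟨j, hj⟩
  · exact D.2.subset_complement hz.2 ⟨j, Finset.mem_compl.2 hj⟩

/-- The case of single chambers; the general case applies it in each of the `m` coordinates. -/
theorem inter_bijective {ℓ : ℕ} {ι : Type} [Fintype ι] (A : Arrangement ℓ ι)
    (S : Finset ι) (hr : A.rnk = A.rnkOn S + A.rnkOn Sᶜ) :
    Function.Bijective (fun p : (A.restrict S).Ch × (A.restrict Sᶜ).Ch =>
      (⟨p.1.1 ∩ p.2.1, A.isChamber_inter S hr p.1 p.2⟩ : A.Ch)) := by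
  constructor
  · rintro ⟨C, D⟩ ⟨C', D'⟩ h
    have h' : C.1 ∩ D.1 = C'.1 ∩ D'.1 := congrArg Subtype.val h
    obtain ⟨z, hz⟩ := A.chamber_inter_nonempty S hr C D
    have hz' : z ∈ C'.1 ∩ D'.1 := h' ▸ hz
    refine Prod.ext (Subtype.ext ?_) (Subtype.ext ?_)
    · exact (C.2.eq_signCell hz.1).trans (C'.2.eq_signCell hz'.1).symm
    · exact (D.2.eq_signCell hz.2).trans (D'.2.eq_signCell hz'.2).symm
  · intro E
    obtain ⟨x, hx⟩ := E.2.nonempty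
    have hxc := E.2.subset_complement hx
    refine ⟨⟨⟨_, (A.restrict S).isChamber_signCell (A.complement_subset_restrict S hxc)⟩,
      ⟨_, (A.restrict Sᶜ).isChamber_signCell (A.complement_subset_restrict Sᶜ hxc)⟩⟩,
      Subtype.ext ?_⟩
    exact (A.signCell_restrict_inter S x).trans (E.2.eq_signCell hx).symm

end Arrangement

/-- **Lemma.** If `𝒜 = 𝒜₁ ⊎ 𝒜₂` with `𝒜₁, 𝒜₂` nonempty, then the map
`Ch(𝒜₁)^m × Ch(𝒜₂)^m → Ch(𝒜₁ ⊎ 𝒜₂)^m`, `(C₁,…,C_m,D₁,…,D_m) ↦ (C₁ ∩ D₁,…,C_m ∩ D_m)`,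
is bijective (recorded as: there is an equivalence whose value is componentwise
intersection of chambers). -/
theorem chambers_product_bijection {ℓ : ℕ} {ι : Type} [Fintype ι] (A : Arrangement ℓ ι)
    (S : Finset ι) (hS : S.Nonempty) (hSc : Sᶜ.Nonempty)
    (hr : A.rnk = A.rnkOn S + A.rnkOn Sᶜ)
    (m : ℕ) (hm : 0 < m) :
    ∃ e : ((Fin m → (A.restrict S).Ch) × (Fin m → (A.restrict Sᶜ).Ch)) ≃ (Fin m → A.Ch),
      ∀ (CD : (Fin m → (A.restrict S).Ch) × (Fin m → (A.restrict Sᶜ).Ch)) (i : Fin m),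
        ((e CD) i).1 = (CD.1 i).1 ∩ (CD.2 i).1 := by
  refine ⟨(Equiv.arrowProdEquivProdArrow (Fin m) (fun _ => (A.restrict S).Ch)
    (fun _ => (A.restrict Sᶜ).Ch)).symm.trans
      (Equiv.piCongrRight fun _ => Equiv.ofBijective _ (A.inter_bijective S hr)), ?_⟩
  intro CD i
  rfl
end
end
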